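/- (Agglomeration property.) Let 0 < λ ≤ λ̄, let x* be the minimizer of the sum-of-norms clustering objective with parameter λ, and let x̄* be the minimizer with parameter λ̄. If C ⊆ {1,…,n} and x̂ ∈ ℝ^d satisfy x_i* = x̂ for all i ∈ C and x_i* ≠ x̂ for all i ∉ C (i.e., C is exactly one cluster at parameter λ), then there exists x̂′ ∈ ℝ^d such that x̄_i* = x̂′ for all i ∈ C (i.e., the points of C remain together in one cluster at parameter λ̄). -/

import Mathlib

open Finset

/-- The sum-of-norms clustering objective. -/
noncomputable def sonObjective {d n : ℕ} (a : Fin n → EuclideanSpace ℝ (Fin d)) (lam : ℝ)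
    (x : Fin n → EuclideanSpace ℝ (Fin d)) : ℝ :=
  (1 / 2) * ∑ i, ‖x i - a i‖ ^ 2 + lam * ∑ i, ∑ j, if i < j then ‖x i - x j‖ else 0

/-!
Let `C` be a cluster of the minimizer `x` at `λ`, and perturb the points of `C` by vectors `y i`
with `∑ i ∈ C, y i = 0`. To first order, the distances from `C` to an outside point do not change
in total, because all points of `C` see that point in the same direction. Minimality of `x`
therefore forces `∑ i ∈ C, ⟪a i, y i⟫ ≤ (λ / 2) ∑ i ∈ C, ∑ j ∈ C, ‖y i - y j‖`.

At `μ ≥ λ`, collapse the points `z i`, `i ∈ C`, of the minimizer `z` to their mean `m`. By the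
triangle inequality this does not increase the total distance to an outside point, so minimality
of `z` bounds `(1 / 2) ∑ i ∈ C, ‖z i - m‖ ^ 2 + (μ / 2) ∑ i ∈ C, ∑ j ∈ C, ‖z i - z j‖` by
`∑ i ∈ C, ⟪a i, z i - m⟫`. The first inequality with `y i = z i - m` then leaves
`∑ i ∈ C, ‖z i - m‖ ^ 2 ≤ 0`.
-/

open scoped RealInnerProductSpace

section DoubleSums

variable {ι R : Type*} [Fintype ι] [CommSemiring R] {g : ι → ι → R}

lemma two_mul_sum_sum_ite_lt [LinearOrder ι] (hsymm : ∀ i j, g i j = g j i)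
    (hdiag : ∀ i, g i i = 0) :
    2 * (∑ i, ∑ j, if i < j then g i j else 0) = ∑ i, ∑ j, g i j := by
  have split (i j : ι) :
      g i j = (if i < j then g i j else 0) + (if j < i then g j i else 0) := by
    rcases lt_trichotomy i j with h | rfl | h
    · simp [h, h.not_gt]
    · simp [hdiag]
    · simp [h, h.not_gt, hsymm i j]
  have swap : (∑ i, ∑ j, if j < i then g j i else 0) = ∑ i, ∑ j, if i < j then g i j else 0 :=
    sum_comm
  rw [sum_congr rfl fun i _ => sum_congr rfl fun j _ => split i j]
  simp only [sum_add_distrib]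
  rw [swap, two_mul]

lemma sum_sum_eq_add_compl [DecidableEq ι] (C : Finset ι) (hsymm : ∀ i j, g i j = g j i) :
    ∑ i, ∑ j, g i j = ∑ i ∈ C, ∑ j ∈ C, g i j + 2 * ∑ j ∈ Cᶜ, ∑ i ∈ C, g i j
      + ∑ i ∈ Cᶜ, ∑ j ∈ Cᶜ, g i j := by
  have cross : ∑ i ∈ Cᶜ, ∑ j ∈ C, g i j = ∑ j ∈ Cᶜ, ∑ i ∈ C, g i j :=
    sum_congr rfl fun j _ => sum_congr rfl fun i _ => hsymm j i
  simp only [← sum_add_sum_compl C, sum_add_distrib]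
  rw [cross, sum_comm (s := C) (t := Cᶜ)]
  ring

end DoubleSums

section Mean

lemma exists_sum_sub_eq_zero {ι E : Type*} [AddCommGroup E] [Module ℝ E] {C : Finset ι}
    (hC : C.Nonempty) (x : ι → E) :
    ∃ m, ∑ i ∈ C, (x i - m) = 0 := by
  refine ⟨(#C : ℝ)⁻¹ • ∑ i ∈ C, x i, ?_⟩
  have card_ne_zero : (#C : ℝ) ≠ 0 := Nat.cast_ne_zero.2 hC.card_ne_zero
  rw [sum_sub_distrib, sum_const, ← Nat.cast_smul_eq_nsmul ℝ, smul_inv_smul₀ card_ne_zero,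
    sub_self]

variable {ι E : Type*} [NormedAddCommGroup E] {C : Finset ι} {x : ι → E} {m : E}

section NormedSpace

variable [NormedSpace ℝ E]

lemma sum_norm_mean_sub_le (hm : ∑ i ∈ C, (x i - m) = 0) (z : E) :
    ∑ _i ∈ C, ‖m - z‖ ≤ ∑ i ∈ C, ‖x i - z‖ := by
  have sum_eq : ∑ i ∈ C, (x i - z) = #C • (m - z) := by
    rw [← sum_const, ← sub_eq_zero, ← sum_sub_distrib]
    simpa only [sub_sub_sub_cancel_right] using hm
  calc ∑ _i ∈ C, ‖m - z‖ = ‖∑ i ∈ C, (x i - z)‖ := by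
        rw [sum_eq, sum_const, RCLike.norm_nsmul ℝ]
    _ ≤ ∑ i ∈ C, ‖x i - z‖ := norm_sum_le _ _

lemma sum_sum_norm_collapse_add_le [Fintype ι] [DecidableEq ι]
    (hm : ∑ i ∈ C, (x i - m) = 0) :
    ∑ i, ∑ j, ‖C.piecewise (fun _ => m) x i - C.piecewise (fun _ => m) x j‖
      + ∑ i ∈ C, ∑ j ∈ C, ‖x i - x j‖ ≤ ∑ i, ∑ j, ‖x i - x j‖ := by
  set x' := C.piecewise (fun _ => m) x
  have eq_mean (i) (hi : i ∈ C) : x' i = m := piecewise_eq_of_mem _ _ _ hi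
  have eq_self (i) (hi : i ∈ Cᶜ) : x' i = x i := piecewise_eq_of_notMem _ _ _ (mem_compl.1 hi)
  have inside : ∑ i ∈ C, ∑ j ∈ C, ‖x' i - x' j‖ = 0 :=
    sum_eq_zero fun i hi => sum_eq_zero fun j hj => by simp [eq_mean, hi, hj]
  have across : ∑ j ∈ Cᶜ, ∑ i ∈ C, ‖x' i - x' j‖ ≤ ∑ j ∈ Cᶜ, ∑ i ∈ C, ‖x i - x j‖ := by
    refine sum_le_sum fun j hj => ?_
    rw [eq_self j hj, sum_congr rfl fun i hi => by rw [eq_mean i hi]]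
    exact sum_norm_mean_sub_le hm (x j)
  have outside : ∑ i ∈ Cᶜ, ∑ j ∈ Cᶜ, ‖x' i - x' j‖ = ∑ i ∈ Cᶜ, ∑ j ∈ Cᶜ, ‖x i - x j‖ :=
    sum_congr rfl fun i hi => sum_congr rfl fun j hj => by rw [eq_self i hi, eq_self j hj]
  rw [sum_sum_eq_add_compl C fun i j => norm_sub_rev (x' i) (x' j),
    sum_sum_eq_add_compl C fun i j => norm_sub_rev (x i) (x j), inside, outside]
  linarith

end NormedSpace

variable [InnerProductSpace ℝ E]

lemma sum_norm_mean_sub_sq (hm : ∑ i ∈ C, (x i - m) = 0) (a : ι → E) :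
    ∑ i ∈ C, ‖m - a i‖ ^ 2 = ∑ i ∈ C, ‖x i - a i‖ ^ 2
      + 2 * ∑ i ∈ C, ⟪a i, x i - m⟫ - ∑ i ∈ C, ‖x i - m‖ ^ 2 := by
  have expand (i : ι) : ‖m - a i‖ ^ 2
      = ‖x i - a i‖ ^ 2 + 2 * ⟪a i, x i - m⟫ - ‖x i - m‖ ^ 2 - 2 * ⟪m, x i - m⟫ := by
    have decomp : x i - a i = (m - a i) + (x i - m) := by abel
    rw [decomp, norm_add_sq_real, inner_sub_left]
    ring
  have cross : ∑ i ∈ C, ⟪m, x i - m⟫ = 0 := by rw [← inner_sum, hm, inner_zero_right]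
  simp only [expand, sum_sub_distrib, sum_add_distrib, ← mul_sum, cross]
  ring

lemma sum_norm_collapse_sub_sq [Fintype ι] [DecidableEq ι]
    (hm : ∑ i ∈ C, (x i - m) = 0) (a : ι → E) :
    ∑ i, ‖C.piecewise (fun _ => m) x i - a i‖ ^ 2 = ∑ i, ‖x i - a i‖ ^ 2
      + 2 * ∑ i ∈ C, ⟪a i, x i - m⟫ - ∑ i ∈ C, ‖x i - m‖ ^ 2 := by
  have inside : ∑ i ∈ C, ‖C.piecewise (fun _ => m) x i - a i‖ ^ 2 = ∑ i ∈ C, ‖m - a i‖ ^ 2 :=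
    sum_congr rfl fun i hi => by rw [piecewise_eq_of_mem _ _ _ hi]
  have outside :
      ∑ i ∈ Cᶜ, ‖C.piecewise (fun _ => m) x i - a i‖ ^ 2 = ∑ i ∈ Cᶜ, ‖x i - a i‖ ^ 2 :=
    sum_congr rfl fun i hi => by rw [piecewise_eq_of_notMem _ _ _ (mem_compl.1 hi)]
  rw [← sum_add_sum_compl C, ← sum_add_sum_compl C fun i => ‖x i - a i‖ ^ 2, inside, outside,
    sum_norm_mean_sub_sq hm]
  ring

end Mean

lemma hasDerivAt_add_smul_zero {E : Type*} [NormedAddCommGroup E] [NormedSpace ℝ E] (v w : E) :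
    HasDerivAt (fun t : ℝ => v + t • w) w 0 := by
  simpa using ((hasDerivAt_id (0 : ℝ)).smul_const w).const_add v

lemma nonneg_of_isLocalMinOn_Ici {φ : ℝ → ℝ} {φ' t₀ : ℝ} (hmin : IsLocalMinOn φ (Set.Ici t₀) t₀)
    (hφ : HasDerivWithinAt φ φ' (Set.Ici t₀) t₀) : 0 ≤ φ' := by
  have one_mem : (1 : ℝ) ∈ posTangentConeAt (Set.Ici t₀) t₀ :=
    mem_posTangentConeAt_of_segment_subset <|
      (convex_Ici t₀).segment_subset Set.self_mem_Ici (by simp)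
  simpa using hmin.hasFDerivWithinAt_nonneg hφ.hasFDerivWithinAt one_mem

section NormDirDeriv

variable {E : Type*} [NormedAddCommGroup E] [InnerProductSpace ℝ E]

open scoped Classical in
/-- The one-sided directional derivative of the norm at `v` in the direction `w`, i.e. the right
derivative of `t ↦ ‖v + t • w‖` at `0`. The norm is not differentiable at `v = 0`, where this is
`‖w‖`. -/
noncomputable def normDirDeriv (v w : E) : ℝ :=
  if v = 0 then ‖w‖ else ⟪v, w⟫ / ‖v‖

@[simp]
lemma normDirDeriv_zero_left (w : E) : normDirDeriv 0 w = ‖w‖ := if_pos rfl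

lemma normDirDeriv_of_ne_zero {v : E} (hv : v ≠ 0) (w : E) : normDirDeriv v w = ⟪v, w⟫ / ‖v‖ :=
  if_neg hv

@[simp]
lemma normDirDeriv_zero_right (v : E) : normDirDeriv v 0 = 0 := by
  simp [normDirDeriv]

lemma normDirDeriv_neg_neg (v w : E) : normDirDeriv (-v) (-w) = normDirDeriv v w := by
  rcases eq_or_ne v 0 with rfl | hv
  · simp
  · simp [normDirDeriv_of_ne_zero, hv]

lemma hasDerivWithinAt_norm_add_smul (v w : E) :
    HasDerivWithinAt (fun t : ℝ => ‖v + t • w‖) (normDirDeriv v w) (Set.Ici 0) 0 := by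
  rcases eq_or_ne v 0 with rfl | hv
  · have linear : HasDerivWithinAt (fun t : ℝ => t * ‖w‖) (normDirDeriv 0 w) (Set.Ici 0) 0 := by
      simpa using (hasDerivWithinAt_id (0 : ℝ) (Set.Ici 0)).mul_const ‖w‖
    refine linear.congr_of_mem (fun t ht => ?_) Set.self_mem_Ici
    rw [zero_add, norm_smul, Real.norm_of_nonneg ht]
  · have sq_ne_zero : ‖v + (0 : ℝ) • w‖ ^ 2 ≠ 0 := by simpa using hv
    have sqrt_deriv := ((hasDerivAt_add_smul_zero v w).norm_sq.sqrt sq_ne_zero).hasDerivWithinAt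
      (s := Set.Ici 0)
    simp only [Real.sqrt_sq (norm_nonneg _), zero_smul, add_zero] at sqrt_deriv
    rwa [mul_div_mul_left _ _ two_ne_zero, ← normDirDeriv_of_ne_zero hv] at sqrt_deriv

lemma sum_normDirDeriv_eq_zero {ι : Type*} {C : Finset ι} {y : ι → E} (hy : ∑ i ∈ C, y i = 0)
    {v : E} (hv : v ≠ 0) : ∑ i ∈ C, normDirDeriv v (y i) = 0 := by
  simp only [normDirDeriv_of_ne_zero hv]
  rw [← sum_div, ← inner_sum, hy, inner_zero_right, zero_div]

end NormDirDeriv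

section Objective

variable {ι E : Type*} [Fintype ι] [NormedAddCommGroup E]

/-- The sum-of-norms clustering objective for points indexed by any finite type in any normed
space. The penalty runs over ordered pairs, so that no order on the indices is needed; hence the
factor `lam / 2` in place of `lam`. -/
noncomputable def sumOfNormsObjective (a : ι → E) (lam : ℝ) (x : ι → E) : ℝ :=
  (1 / 2) * ∑ i, ‖x i - a i‖ ^ 2 + lam / 2 * ∑ i, ∑ j, ‖x i - x j‖

lemma sonObjective_eq_sumOfNormsObjective {d n : ℕ} (a : Fin n → EuclideanSpace ℝ (Fin d))
    (lam : ℝ) : sonObjective a lam = sumOfNormsObjective a lam := by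
  funext x
  rw [sonObjective, sumOfNormsObjective,
    ← two_mul_sum_sum_ite_lt (fun i j => norm_sub_rev (x i) (x j)) (fun i => by simp)]
  ring

variable [InnerProductSpace ℝ E] {a x : ι → E} {lam : ℝ} {C : Finset ι}

lemma hasDerivWithinAt_sumOfNormsObjective (a : ι → E) (lam : ℝ) (x y : ι → E) :
    HasDerivWithinAt (fun t : ℝ => sumOfNormsObjective a lam (x + t • y))
      (∑ i, ⟪x i - a i, y i⟫ + lam / 2 * ∑ i, ∑ j, normDirDeriv (x i - x j) (y i - y j))
      (Set.Ici 0) 0 := by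
  have fidelity (i : ι) : HasDerivWithinAt (fun t : ℝ => ‖(x + t • y) i - a i‖ ^ 2)
      (2 * ⟪x i - a i, y i⟫) (Set.Ici 0) 0 := by
    have := (hasDerivAt_add_smul_zero (x i - a i) (y i)).norm_sq.hasDerivWithinAt (s := Set.Ici 0)
    simpa [sub_add_eq_add_sub] using this
  have penalty (i j : ι) : HasDerivWithinAt (fun t : ℝ => ‖(x + t • y) i - (x + t • y) j‖)
      (normDirDeriv (x i - x j) (y i - y j)) (Set.Ici 0) 0 := by
    simpa [smul_sub, add_sub_add_comm] using
      hasDerivWithinAt_norm_add_smul (x i - x j) (y i - y j)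
  have total := ((HasDerivWithinAt.fun_sum fun i (_ : i ∈ univ) => fidelity i).const_mul
    (1 / 2 : ℝ)).add ((HasDerivWithinAt.fun_sum fun i (_ : i ∈ univ) =>
      HasDerivWithinAt.fun_sum fun j (_ : j ∈ univ) => penalty i j).const_mul (lam / 2))
  refine total.congr_deriv ?_
  rw [← mul_sum]
  ring

lemma sumOfNormsObjective_dirDeriv_nonneg (hx : IsLocalMin (sumOfNormsObjective a lam) x)
    (y : ι → E) :
    0 ≤ ∑ i, ⟪x i - a i, y i⟫
      + lam / 2 * ∑ i, ∑ j, normDirDeriv (x i - x j) (y i - y j) := by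
  have line_continuous : Continuous fun t : ℝ => x + t • y := by fun_prop
  have line_min : IsLocalMin (fun t : ℝ => sumOfNormsObjective a lam (x + t • y)) 0 :=
    IsLocalMin.comp_continuous (f := sumOfNormsObjective a lam) (by simpa using hx)
      line_continuous.continuousAt
  exact nonneg_of_isLocalMinOn_Ici (line_min.on _) (hasDerivWithinAt_sumOfNormsObjective a lam x y)

lemma sum_sum_normDirDeriv_piecewise [DecidableEq ι] {c : E} (hC : ∀ i, i ∈ C ↔ x i = c)
    {y : ι → E} (hy : ∑ i ∈ C, y i = 0) :
    ∑ i, ∑ j, normDirDeriv (x i - x j) (C.piecewise y 0 i - C.piecewise y 0 j)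
      = ∑ i ∈ C, ∑ j ∈ C, ‖y i - y j‖ := by
  have inside (i) (hi : i ∈ C) (j) (hj : j ∈ C) :
      normDirDeriv (x i - x j) (C.piecewise y 0 i - C.piecewise y 0 j) = ‖y i - y j‖ := by
    simp [hi, hj, (hC i).1 hi, (hC j).1 hj]
  have across (j) (hj : j ∈ Cᶜ) :
      ∑ i ∈ C, normDirDeriv (x i - x j) (C.piecewise y 0 i - C.piecewise y 0 j) = 0 := by
    rw [mem_compl] at hj
    have separated : c - x j ≠ 0 := sub_ne_zero.2 fun h => hj ((hC j).2 h.symm)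
    rw [← sum_normDirDeriv_eq_zero hy separated]
    exact sum_congr rfl fun i hi => by simp [hi, hj, (hC i).1 hi]
  have outside (i) (hi : i ∈ Cᶜ) (j) (hj : j ∈ Cᶜ) :
      normDirDeriv (x i - x j) (C.piecewise y 0 i - C.piecewise y 0 j) = 0 := by
    rw [mem_compl] at hi hj
    simp [hi, hj]
  rw [sum_sum_eq_add_compl C fun i j => by rw [← normDirDeriv_neg_neg, neg_sub, neg_sub],
    sum_congr rfl fun i hi => sum_congr rfl (inside i hi), sum_eq_zero across,
    sum_eq_zero fun i hi => sum_eq_zero (outside i hi)]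
  ring

lemma sum_inner_le_of_isLocalMin (hx : IsLocalMin (sumOfNormsObjective a lam) x) {c : E}
    (hC : ∀ i, i ∈ C ↔ x i = c) {y : ι → E} (hy : ∑ i ∈ C, y i = 0) :
    ∑ i ∈ C, ⟪a i, y i⟫ ≤ lam / 2 * ∑ i ∈ C, ∑ j ∈ C, ‖y i - y j‖ := by
  classical
  have fidelity : ∑ i, ⟪x i - a i, C.piecewise y 0 i⟫ = -∑ i ∈ C, ⟪a i, y i⟫ := calc
    _ = ∑ i ∈ C, ⟪x i - a i, y i⟫ := by
      simp only [piecewise, Pi.zero_apply, apply_ite (inner ℝ _), inner_zero_right,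
        sum_ite_mem, univ_inter]
    _ = ∑ i ∈ C, (⟪c, y i⟫ - ⟪a i, y i⟫) :=
      sum_congr rfl fun i hi => by rw [(hC i).1 hi, inner_sub_left]
    _ = -∑ i ∈ C, ⟪a i, y i⟫ := by
      rw [sum_sub_distrib, ← inner_sum, hy, inner_zero_right, zero_sub]
  have first_order := sumOfNormsObjective_dirDeriv_nonneg hx (C.piecewise y 0)
  rw [fidelity, sum_sum_normDirDeriv_piecewise hC hy] at first_order
  linarith

lemma half_sum_norm_sq_add_le_of_isMinOn (hlam : 0 ≤ lam)
    (hx : IsMinOn (sumOfNormsObjective a lam) Set.univ x) {m : E} (hm : ∑ i ∈ C, (x i - m) = 0) :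
    (1 / 2) * ∑ i ∈ C, ‖x i - m‖ ^ 2 + lam / 2 * ∑ i ∈ C, ∑ j ∈ C, ‖x i - x j‖
      ≤ ∑ i ∈ C, ⟪a i, x i - m⟫ := by
  classical
  have collapse_ge := isMinOn_univ_iff.1 hx (C.piecewise (fun _ => m) x)
  have penalty_le := mul_le_mul_of_nonneg_left (sum_sum_norm_collapse_add_le hm)
    (div_nonneg hlam zero_le_two)
  rw [sumOfNormsObjective, sumOfNormsObjective, sum_norm_collapse_sub_sq hm] at collapse_ge
  rw [mul_add] at penalty_le
  linarith

theorem agglomeration_property_general {lambar : ℝ} (hlambar : 0 ≤ lambar)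
    (hle : lam ≤ lambar) {xbar : ι → E} (hx : IsMinOn (sumOfNormsObjective a lam) Set.univ x)
    (hxbar : IsMinOn (sumOfNormsObjective a lambar) Set.univ xbar) {i j : ι} (hij : x i = x j) :
    xbar i = xbar j := by
  classical
  let C : Finset ι := {k | x k = x j}
  have mem_C (k) : k ∈ C ↔ x k = x j := by simp [C]
  obtain ⟨m, hm⟩ := exists_sum_sub_eq_zero ⟨j, (mem_C j).2 rfl⟩ xbar
  have cluster_le := sum_inner_le_of_isLocalMin (hx.isLocalMin Filter.univ_mem) mem_C hm
  have collapse_le := half_sum_norm_sq_add_le_of_isMinOn hlambar hxbar hm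
  simp only [sub_sub_sub_cancel_right] at cluster_le
  have penalty_le : lam / 2 * ∑ k ∈ C, ∑ l ∈ C, ‖xbar k - xbar l‖
      ≤ lambar / 2 * ∑ k ∈ C, ∑ l ∈ C, ‖xbar k - xbar l‖ := by gcongr
  have deviation_le : ∑ k ∈ C, ‖xbar k - m‖ ^ 2 ≤ 0 := by linarith
  have eq_mean (k) (hk : k ∈ C) : xbar k = m := by
    have := (sum_eq_zero_iff_of_nonneg fun _ _ => by positivity).1
      (deviation_le.antisymm (by positivity)) k hk
    simpa [sub_eq_zero] using this
  rw [eq_mean i ((mem_C i).2 hij), eq_mean j ((mem_C j).2 rfl)]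

end Objective

/-- Agglomeration property (Chiquet et al.): if `C` is exactly one cluster of the
minimizer at parameter `λ`, then the points of `C` remain together in one cluster of the
minimizer at any parameter `λ̄ ≥ λ`. -/
theorem agglomeration_property
    (d n : ℕ) (a : Fin n → EuclideanSpace ℝ (Fin d)) (lam lambar : ℝ)
    (hlam : 0 < lam) (hle : lam ≤ lambar)
    (x xbar : Fin n → EuclideanSpace ℝ (Fin d))
    (hx : ∀ y : Fin n → EuclideanSpace ℝ (Fin d), sonObjective a lam x ≤ sonObjective a lam y)
    (hxbar : ∀ y : Fin n → EuclideanSpace ℝ (Fin d),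
      sonObjective a lambar xbar ≤ sonObjective a lambar y)
    (C : Finset (Fin n)) (xhat : EuclideanSpace ℝ (Fin d))
    (hin : ∀ i ∈ C, x i = xhat) (hout : ∀ i ∉ C, x i ≠ xhat) :
    ∃ xhat' : EuclideanSpace ℝ (Fin d), ∀ i ∈ C, xbar i = xhat' := by
  rw [sonObjective_eq_sumOfNormsObjective] at hx hxbar
  rcases C.eq_empty_or_nonempty with rfl | ⟨j, hj⟩
  · simp
  · exact ⟨xbar j, fun i hi => agglomeration_property_general (hlam.le.trans hle) hle
      (isMinOn_univ_iff.2 hx) (isMinOn_univ_iff.2 hxbar) ((hin i hi).trans (hin j hj).symm)⟩
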